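/- Let $n \geq 2$, let $\alpha_1,\dots,\alpha_n$ and $m \geq 3$ be integers with $\alpha_j \geq 3$. There exist constants $c, c_1, \dots, c_n > 0$ such that for every $\delta \in (0,1/2)$ the following holds. Define $f(y) = \prod_{j=1}^n f_j(y_j)$ where $f_1(y_1) = e^{-i y_1^m} \chi_{E_1}(y_1)$ with $E_1 = [-c_1 \delta^{-2/m}, c_1\delta^{-2/m}]$, and $f_j(y_j) = \chi_{E_j}(y_j)$ with $E_j = [-c_j \delta^{-\alpha_j/m}, c_j \delta^{-\alpha_j/m}]$ for $2 \leq j \leq n$; and let $R_\delta = \{x \in \mathbb{R}^n : |x_1 - 1| \leq c\delta^2,\ |x_i| \leq c\delta \text{ for } 2 \leq i \leq n\}$. Then for every $x \in R_\delta$, $|T_{\alpha,m}f(x)| \geq \left(\prod_{j=1}^n c_j\right) \delta^{-2/m}\, \delta^{-(\sum_{j=2}^n \alpha_j)/m}$, and consequently $\int_{R_\delta} |T_{\alpha,m}f(x)|^2\, dx \geq \left(\prod_{j=1}^n c_j\right)^2 (2c)^{n}\,\delta^{n+1} \left( \delta^{-2/m}\, \delta^{-(\sum_{j=2}^n \alpha_j)/m}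 \right)^2$ up to a fixed positive constant factor. -/

import Mathlib

open MeasureTheory
open scoped ENNReal

/-- The oscillatory integral operator
`T_{α,m} f (x) = ∫ e^{i (x₁^{α₁} y₁^m + ⋯ + xₙ^{αₙ} yₙ^m)} f(y) dy`. -/
noncomputable def oscOp {n : ℕ} (α : Fin n → ℕ) (m : ℕ)
    (f : EuclideanSpace ℝ (Fin n) → ℂ) (x : EuclideanSpace ℝ (Fin n)) : ℂ :=
  ∫ y : EuclideanSpace ℝ (Fin n),
    Complex.exp (Complex.I * Complex.ofReal (∑ j, (x j) ^ (α j) * (y j) ^ m)) * f y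

/-- The Knapp-type test function `f(y) = e^{-i y₁^m} χ_{E₁}(y₁) ∏_{j≥2} χ_{E_j}(y_j)`,
where `E₁ = [-c₁ δ^{-2/m}, c₁ δ^{-2/m}]` and `E_j = [-c_j δ^{-α_j/m}, c_j δ^{-α_j/m}]`.
Here the first coordinate is indexed by `0 : Fin n`. -/
noncomputable def knappF {n : ℕ} [NeZero n] (α : Fin n → ℕ) (m : ℕ) (c' : Fin n → ℝ)
    (δ : ℝ) (y : EuclideanSpace ℝ (Fin n)) : ℂ :=
  Complex.exp (-Complex.I * Complex.ofReal ((y 0) ^ m)) *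
    ∏ j : Fin n, Set.indicator
      (Set.Icc (-(c' j * δ ^ (-(if j = 0 then (2 : ℝ) else (α j : ℝ)) / (m : ℝ))))
        (c' j * δ ^ (-(if j = 0 then (2 : ℝ) else (α j : ℝ)) / (m : ℝ))))
      (fun _ => (1 : ℂ)) (y j)

/-- The Knapp rectangle `R_δ = {x : |x₁ - 1| ≤ c δ², |x_i| ≤ c δ (i ≥ 2)}`. -/
def knappRect (n : ℕ) [NeZero n] (c δ : ℝ) : Set (EuclideanSpace ℝ (Fin n)) :=
  {x | |x 0 - 1| ≤ c * δ ^ 2 ∧ ∀ i : Fin n, i ≠ 0 → |x i| ≤ c * δ}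

/-!
The factor `e^{-i y₁^m}` of the test function cancels the phase at `x = (1, 0, …, 0)`. On `R_δ` the
phase that remains is `(x₁^{α₁} - 1) y₁^m + ∑_{j ≥ 2} x_j^{α_j} y_j^m`, and the dimensions of `R_δ`
are reciprocal to those of the support of `f`: the powers of `δ` cancel in every term, so the phase
is at most `1` once the `c_j` are small. There is then no cancellation in the integral: its real
part is at least half the volume of the support. The `L²` bound follows by integrating over `R_δ`.
-/

theorem abs_pow_sub_one_le {t r : ℝ} (h : |t - 1| ≤ r) (k : ℕ) :
    |t ^ k - 1| ≤ r * k * (1 + r) ^ (k - 1) := by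
  have hr : 0 ≤ r := (abs_nonneg _).trans h
  have ht : max |t| |1| ≤ 1 + r := by
    rw [abs_le] at h
    rw [abs_one, max_le_iff, abs_le]
    exact ⟨⟨by linarith, by linarith⟩, by linarith⟩
  calc |t ^ k - 1| = |t ^ k - 1 ^ k| := by rw [one_pow]
    _ ≤ |t - 1| * k * max |t| |1| ^ (k - 1) := abs_pow_sub_pow_le t 1 k
    _ ≤ r * k * (1 + r) ^ (k - 1) := by gcongr

theorem abs_pow_sub_one_mul_pow_le {t s c δ w : ℝ} (hc : 0 ≤ c) (hδ : 0 ≤ δ) (hδ_le : δ ≤ 1)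
    (ht : |t - 1| ≤ c * δ ^ 2) (hs : |s| ≤ w) (k m : ℕ) :
    |(t ^ k - 1) * s ^ m| ≤ c * k * (1 + c) ^ (k - 1) * (w ^ m * δ ^ 2) := by
  have hw : 0 ≤ w := (abs_nonneg _).trans hs
  calc |(t ^ k - 1) * s ^ m|
      ≤ c * δ ^ 2 * k * (1 + c * δ ^ 2) ^ (k - 1) * w ^ m := by
        rw [abs_mul, abs_pow s]
        exact mul_le_mul (abs_pow_sub_one_le ht k) (by gcongr) (by positivity) (by positivity)
    _ ≤ c * δ ^ 2 * k * (1 + c) ^ (k - 1) * w ^ m := by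
        gcongr
        exact mul_le_of_le_one_right hc (pow_le_one₀ hδ hδ_le)
    _ = c * k * (1 + c) ^ (k - 1) * (w ^ m * δ ^ 2) := by ring

theorem abs_pow_mul_pow_le {t s c δ w : ℝ} (ht : |t| ≤ c * δ) (hs : |s| ≤ w) (k m : ℕ) :
    |t ^ k * s ^ m| ≤ c ^ k * (w ^ m * δ ^ k) := by
  have hcδ : 0 ≤ c * δ := (abs_nonneg _).trans ht
  calc |t ^ k * s ^ m| = |t| ^ k * |s| ^ m := by rw [abs_mul, abs_pow, abs_pow]
    _ ≤ (c * δ) ^ k * w ^ m := by gcongr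
    _ = c ^ k * (w ^ m * δ ^ k) := by ring

theorem half_measureReal_univ_le_norm_integral_exp {X : Type*} [MeasurableSpace X] {μ : Measure X}
    [IsFiniteMeasure μ] {φ : X → ℝ} (hφ : AEMeasurable φ μ) (hφ_le : ∀ᵐ x ∂μ, |φ x| ≤ 1) :
    1 / 2 * μ.real Set.univ ≤ ‖∫ x, Complex.exp (Complex.I * φ x) ∂μ‖ := by
  have integrable_exp : Integrable (fun x => Complex.exp (Complex.I * φ x)) μ := by
    refine .of_bound (C := 1) (by fun_prop) (.of_forall fun x => ?_)
    rw [Complex.norm_exp_I_mul_ofReal]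
  have half_le_re : ∀ᵐ x ∂μ, 1 / 2 ≤ (Complex.exp (Complex.I * φ x)).re := by
    filter_upwards [hφ_le] with x hx
    rw [mul_comm, Complex.exp_ofReal_mul_I_re]
    linarith [Real.one_sub_sq_div_two_le_cos (x := φ x), (sq_le_one_iff_abs_le_one _).2 hx]
  calc 1 / 2 * μ.real Set.univ = ∫ _, (1 / 2 : ℝ) ∂μ := by
        rw [integral_const, smul_eq_mul, mul_comm]
    _ ≤ ∫ x, (Complex.exp (Complex.I * φ x)).re ∂μ :=
        integral_mono_ae (integrable_const _) integrable_exp.re half_le_re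
    _ = (∫ x, Complex.exp (Complex.I * φ x) ∂μ).re := integral_re integrable_exp
    _ ≤ _ := Complex.re_le_norm _

theorem sq_mul_measureReal_le_setIntegral_norm_sq {X E : Type*} [TopologicalSpace X] [T2Space X]
    [MeasurableSpace X] [OpensMeasurableSpace X] [NormedAddCommGroup E] {μ : Measure X}
    [IsFiniteMeasureOnCompacts μ] {K : Set X} (hK : IsCompact K) {g : X → E}
    (hg : ContinuousOn g K) {B : ℝ} (hB : 0 ≤ B) (hle : ∀ x ∈ K, B ≤ ‖g x‖) :
    B ^ 2 * μ.real K ≤ ∫ x in K, ‖g x‖ ^ 2 ∂μ :=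
  setIntegral_ge_of_const_le_real hK.measurableSet hK.measure_ne_top
    (fun x hx => pow_le_pow_left₀ hB (hle x hx) 2) ((hg.norm.pow 2).integrableOn_compact hK)

section CoordBox

variable {ι : Type*}

/-- The closed box in `ℝ^ι` with centre `a`, sides parallel to the axes, and half-side `r j` in the
direction of the `j`-th coordinate. Both the support of the test function and `R_δ` are such boxes.
It is empty if some `r j` is negative. -/
def coordBox (a r : ι → ℝ) : Set (EuclideanSpace ℝ ι) :=
  {x | ∀ j, |x j - a j| ≤ r j}

theorem coordBox_eq_preimage_pi (a r : ι → ℝ) :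
    coordBox a r = WithLp.ofLp ⁻¹' Set.univ.pi fun j => Metric.closedBall (a j) (r j) := by
  ext x
  simp [coordBox, Real.dist_eq]

theorem isCompact_coordBox (a r : ι → ℝ) : IsCompact (coordBox a r) := by
  rw [coordBox_eq_preimage_pi]
  exact (PiLp.homeomorph 2 fun _ : ι => ℝ).isCompact_preimage.2
    (isCompact_univ_pi fun j => isCompact_closedBall (a j) (r j))

theorem measureReal_coordBox [Fintype ι] (a : ι → ℝ) {r : ι → ℝ} (hr : ∀ j, 0 ≤ r j) :
    volume.real (coordBox a r) = ∏ j, 2 * r j := by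
  rw [coordBox_eq_preimage_pi, (PiLp.volume_preserving_ofLp ι).measureReal_preimage
    (MeasurableSet.univ_pi fun _ => measurableSet_closedBall).nullMeasurableSet,
    measureReal_def, volume_pi_pi, ENNReal.toReal_prod]
  refine Finset.prod_congr rfl fun j _ => ?_
  rw [Real.volume_closedBall, ENNReal.toReal_ofReal (mul_nonneg zero_le_two (hr j))]

end CoordBox

section Knapp

variable {n : ℕ} [NeZero n]

theorem knappRect_eq_coordBox (c δ : ℝ) :
    knappRect n c δ =
      coordBox (Pi.single 0 1) (fun j => if j = 0 then c * δ ^ 2 else c * δ) := by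
  ext x
  refine ⟨fun ⟨h_zero, h_ne⟩ j => ?_, fun h => ⟨by simpa using h 0, fun j hj => ?_⟩⟩
  · rcases eq_or_ne j 0 with rfl | hj
    · simpa using h_zero
    · simpa [hj] using h_ne j hj
  · simpa [hj] using h j

theorem isCompact_knappRect (c δ : ℝ) : IsCompact (knappRect n c δ) := by
  rw [knappRect_eq_coordBox]
  exact isCompact_coordBox _ _

theorem measureReal_knappRect {c δ : ℝ} (hc : 0 ≤ c) (hδ : 0 ≤ δ) :
    volume.real (knappRect n c δ) = (2 * c) ^ n * δ ^ (n + 1) := by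
  have prod_erase : ∏ j ∈ Finset.univ.erase (0 : Fin n), 2 * (if j = 0 then c * δ ^ 2 else c * δ) =
      (2 * (c * δ)) ^ (n - 1) := by
    rw [Finset.prod_congr rfl fun j hj => by rw [if_neg (Finset.ne_of_mem_erase hj)]]
    simp
  rw [knappRect_eq_coordBox, measureReal_coordBox _ fun j => by split_ifs <;> positivity,
    ← Finset.mul_prod_erase _ _ (Finset.mem_univ (0 : Fin n)), prod_erase, if_pos rfl]
  obtain ⟨k, rfl⟩ := Nat.exists_eq_succ_of_ne_zero (NeZero.ne n)
  simp only [Nat.succ_eq_add_one, Nat.add_sub_cancel]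
  ring

/-- The half-length of the interval `E_j` in the test function: `c_1 δ^{-2/m}` for the first
coordinate `j = 0`, and `c_j δ^{-α_j/m}` for the others. -/
noncomputable def knappWidth (α : Fin n → ℕ) (m : ℕ) (c' : Fin n → ℝ) (δ : ℝ) (j : Fin n) : ℝ :=
  c' j * δ ^ (-(if j = 0 then (2 : ℝ) else (α j : ℝ)) / (m : ℝ))

/-- The phase `x_1^{α_1} y_1^m + ⋯ + x_n^{α_n} y_n^m - y_1^m` of the integral defining `T f (x)`,
which includes the modulation `e^{-i y_1^m}` of the test function. -/
noncomputable def knappPhase (α : Fin n → ℕ) (m : ℕ) (x y : EuclideanSpace ℝ (Fin n)) : ℝ :=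
  ∑ j, x j ^ α j * y j ^ m - y 0 ^ m

/-- The bound for `knappPhase` on `R_δ` and the support of the test function, uniform in `δ ≤ 1`.
The first term comes from `|x_1^{α_1} - 1| ≤ α_1 (1 + c)^{α_1 - 1} |x_1 - 1|`; the truncated
subtraction at `α_1 = 0` is harmless because of the factor `α_1`. -/
noncomputable def knappPhaseBound (α : Fin n → ℕ) (m : ℕ) (c : ℝ) (c' : Fin n → ℝ) : ℝ :=
  c * α 0 * (1 + c) ^ (α 0 - 1) * c' 0 ^ m +
    ∑ j ∈ Finset.univ.erase (0 : Fin n), c ^ α j * c' j ^ m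

theorem knappWidth_pos (α : Fin n → ℕ) (m : ℕ) {c' : Fin n → ℝ} (hc' : ∀ j, 0 < c' j) {δ : ℝ}
    (hδ : 0 < δ) (j : Fin n) : 0 < knappWidth α m c' δ j :=
  mul_pos (hc' j) (Real.rpow_pos_of_pos hδ _)

theorem prod_knappWidth (α : Fin n → ℕ) (m : ℕ) (c' : Fin n → ℝ) {δ : ℝ} (hδ : 0 < δ) :
    ∏ j, knappWidth α m c' δ j =
      (∏ j, c' j) * (δ ^ (-(2 / (m : ℝ))) *
        δ ^ (-(∑ j ∈ Finset.univ.erase (0 : Fin n), (α j : ℝ)) / (m : ℝ))) := by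
  unfold knappWidth
  rw [Finset.prod_mul_distrib, ← Finset.mul_prod_erase _ (fun j => δ ^ _) (Finset.mem_univ 0),
    if_pos rfl, neg_div, ← Finset.sum_neg_distrib, Finset.sum_div, Real.rpow_sum_of_pos hδ]
  congr 2
  refine Finset.prod_congr rfl fun j hj => ?_
  rw [if_neg (Finset.ne_of_mem_erase hj)]

theorem knappWidth_pow_mul_pow (α : Fin n → ℕ) {m : ℕ} (hm : m ≠ 0) (c' : Fin n → ℝ) {δ : ℝ}
    (hδ : 0 < δ) (j : Fin n) :
    knappWidth α m c' δ j ^ m * δ ^ (if j = 0 then 2 else α j) = c' j ^ m := by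
  have hm' : (m : ℝ) ≠ 0 := Nat.cast_ne_zero.2 hm
  rw [knappWidth, mul_pow, ← Real.rpow_mul_natCast hδ.le, div_mul_cancel₀ _ hm', mul_assoc,
    ← Real.rpow_natCast δ, ← Real.rpow_add hδ]
  split_ifs <;> simp

theorem knappF_eq_indicator (α : Fin n → ℕ) (m : ℕ) (c' : Fin n → ℝ) (δ : ℝ) :
    knappF α m c' δ = (coordBox 0 (knappWidth α m c' δ)).indicator
      fun y => Complex.exp (-Complex.I * Complex.ofReal (y 0 ^ m)) := by
  classical
  ext y
  have mem_coordBox : y ∈ coordBox 0 (knappWidth α m c' δ) ↔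
      ∀ j, y j ∈ Set.Icc (-knappWidth α m c' δ j) (knappWidth α m c' δ j) := by
    simp [coordBox, abs_le]
  simp only [knappF, Set.indicator_apply, Finset.prod_ite_zero, Finset.prod_const_one,
    Finset.mem_univ, true_imp_iff, mul_ite, mul_one, mul_zero]
  exact if_congr mem_coordBox.symm rfl rfl

theorem oscOp_knappF (α : Fin n → ℕ) (m : ℕ) (c' : Fin n → ℝ) (δ : ℝ)
    (x : EuclideanSpace ℝ (Fin n)) :
    oscOp α m (knappF α m c' δ) x =
      ∫ y in coordBox 0 (knappWidth α m c' δ), Complex.exp (Complex.I * knappPhase α m x y) := by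
  rw [← integral_indicator (isCompact_coordBox _ _).measurableSet, oscOp, knappF_eq_indicator]
  congr 1
  ext y
  by_cases hy : y ∈ coordBox 0 (knappWidth α m c' δ)
  · rw [Set.indicator_of_mem hy, Set.indicator_of_mem hy, ← Complex.exp_add, knappPhase]
    push_cast
    ring_nf
  · rw [Set.indicator_of_notMem hy, Set.indicator_of_notMem hy, mul_zero]

@[fun_prop]
theorem continuous_knappPhase (α : Fin n → ℕ) (m : ℕ) {X : Type*} [TopologicalSpace X]
    {x y : X → EuclideanSpace ℝ (Fin n)} (hx : Continuous x) (hy : Continuous y) :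
    Continuous fun t => knappPhase α m (x t) (y t) := by
  unfold knappPhase
  fun_prop

theorem continuous_oscOp_knappF (α : Fin n → ℕ) (m : ℕ) (c' : Fin n → ℝ) (δ : ℝ) :
    Continuous (oscOp α m (knappF α m c' δ)) := by
  simp only [funext (oscOp_knappF α m c' δ)]
  refine continuous_parametric_integral_of_continuous ?_ (isCompact_coordBox _ _)
  unfold Function.uncurry
  fun_prop

theorem knappPhase_eq_add_sum_erase (α : Fin n → ℕ) (m : ℕ) (x y : EuclideanSpace ℝ (Fin n)) :
    knappPhase α m x y = (x 0 ^ α 0 - 1) * y 0 ^ m +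
      ∑ j ∈ Finset.univ.erase (0 : Fin n), x j ^ α j * y j ^ m := by
  rw [knappPhase, ← Finset.add_sum_erase _ _ (Finset.mem_univ (0 : Fin n))]
  ring

theorem abs_knappPhase_le (α : Fin n → ℕ) {m : ℕ} (hm : m ≠ 0) {c : ℝ} (hc : 0 ≤ c)
    (c' : Fin n → ℝ) {δ : ℝ} (hδ : 0 < δ) (hδ_le : δ ≤ 1) {x y : EuclideanSpace ℝ (Fin n)}
    (hx : x ∈ knappRect n c δ) (hy : y ∈ coordBox 0 (knappWidth α m c' δ)) :
    |knappPhase α m x y| ≤ knappPhaseBound α m c c' := by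
  obtain ⟨hx_zero, hx_ne⟩ := hx
  have abs_y_le : ∀ j, |y j| ≤ knappWidth α m c' δ j := fun j => by simpa using hy j
  have first_term : |(x 0 ^ α 0 - 1) * y 0 ^ m| ≤ c * α 0 * (1 + c) ^ (α 0 - 1) * c' 0 ^ m := by
    have h := abs_pow_sub_one_mul_pow_le hc hδ.le hδ_le hx_zero (abs_y_le 0) (α 0) m
    have hpow := knappWidth_pow_mul_pow α hm c' hδ 0
    rw [if_pos rfl] at hpow
    rwa [hpow] at h
  have other_terms : ∀ j ∈ Finset.univ.erase (0 : Fin n),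
      |x j ^ α j * y j ^ m| ≤ c ^ α j * c' j ^ m := fun j hj => by
    have hj : j ≠ 0 := Finset.ne_of_mem_erase hj
    have h := abs_pow_mul_pow_le (hx_ne j hj) (abs_y_le j) (α j) m
    have hpow := knappWidth_pow_mul_pow α hm c' hδ j
    rw [if_neg hj] at hpow
    rwa [hpow] at h
  rw [knappPhase_eq_add_sum_erase]
  exact (abs_add_le _ _).trans (add_le_add first_term
    ((Finset.abs_sum_le_sum_abs _ _).trans (Finset.sum_le_sum other_terms)))

theorem exists_knappPhaseBound_le_one (α : Fin n → ℕ) {m : ℕ} (hm : m ≠ 0) {c : ℝ} (hc : 0 ≤ c) :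
    ∃ c' : Fin n → ℝ, (∀ j, 0 < c' j) ∧ knappPhaseBound α m c c' ≤ 1 := by
  set A : ℝ := c * α 0 * (1 + c) ^ (α 0 - 1) + ∑ j ∈ Finset.univ.erase (0 : Fin n), c ^ α j
  have hA : 0 ≤ A := by positivity
  refine ⟨fun _ => (1 + A)⁻¹, fun _ => by positivity, ?_⟩
  calc knappPhaseBound α m c (fun _ => (1 + A)⁻¹) = A * (1 + A)⁻¹ ^ m := by
        rw [knappPhaseBound, ← Finset.sum_mul, ← add_mul]
    _ ≤ A * (1 + A)⁻¹ := by
        gcongr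
        exact pow_le_of_le_one (by positivity) (inv_le_one_of_one_le₀ (by linarith)) hm
    _ ≤ 1 := by
        rw [← div_eq_mul_inv, div_le_one (by positivity)]
        linarith

theorem prod_knappWidth_le_norm_oscOp_knappF (α : Fin n → ℕ) {m : ℕ} (hm : m ≠ 0) {c : ℝ}
    (hc : 0 ≤ c) {c' : Fin n → ℝ} (hc' : ∀ j, 0 < c' j) (hbound : knappPhaseBound α m c c' ≤ 1)
    {δ : ℝ} (hδ : 0 < δ) (hδ_le : δ ≤ 1) {x : EuclideanSpace ℝ (Fin n)}
    (hx : x ∈ knappRect n c δ) :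
    ∏ j, knappWidth α m c' δ j ≤ ‖oscOp α m (knappF α m c' δ) x‖ := by
  set w := knappWidth α m c' δ
  have hw : ∀ j, 0 < w j := knappWidth_pos α m hc' hδ
  have isCompact_box : IsCompact (coordBox 0 w) := isCompact_coordBox 0 w
  have : IsFiniteMeasure (volume.restrict (coordBox 0 w)) :=
    isFiniteMeasure_restrict.2 isCompact_box.measure_ne_top
  have phase_le_one : ∀ᵐ y ∂volume.restrict (coordBox 0 w), |knappPhase α m x y| ≤ 1 :=
    ae_restrict_of_forall_mem isCompact_box.measurableSet fun y hy =>
      (abs_knappPhase_le α hm hc c' hδ hδ_le hx hy).trans hbound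
  calc ∏ j, w j = 1 * ∏ j, w j := (one_mul _).symm
    _ ≤ 2 ^ (n - 1) * ∏ j, w j :=
        mul_le_mul_of_nonneg_right (one_le_pow₀ one_le_two)
          (Finset.prod_nonneg fun j _ => (hw j).le)
    _ = 1 / 2 * ∏ j, 2 * w j := by
        rw [Finset.prod_mul_distrib, Finset.prod_const, Finset.card_univ, Fintype.card_fin,
          ← mul_pow_sub_one (NeZero.ne n)]
        ring
    _ = 1 / 2 * volume.real (coordBox 0 w) := by rw [measureReal_coordBox _ fun j => (hw j).le]
    _ ≤ ‖∫ y in coordBox 0 w, Complex.exp (Complex.I * knappPhase α m x y)‖ := by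
        rw [← measureReal_restrict_apply_univ]
        exact half_measureReal_univ_le_norm_integral_exp (by fun_prop) phase_le_one
    _ = _ := by rw [oscOp_knappF]

end Knapp

theorem knapp_lower_bound_general (n : ℕ) [NeZero n] (α : Fin n → ℕ) {m : ℕ} (hm : m ≠ 0)
    {c : ℝ} (hc : 0 ≤ c) :
    ∃ c' : Fin n → ℝ, (∀ j, 0 < c' j) ∧ ∀ δ : ℝ, 0 < δ → δ ≤ 1 →
      (∀ x ∈ knappRect n c δ,
        (∏ j, c' j) * (δ ^ (-(2 / (m : ℝ))) *
            δ ^ (-(∑ j ∈ Finset.univ.erase (0 : Fin n), (α j : ℝ)) / (m : ℝ)))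
          ≤ ‖oscOp α m (knappF α m c' δ) x‖) ∧
      (∏ j, c' j) ^ 2 * (2 * c) ^ n * δ ^ (n + 1) *
          (δ ^ (-(2 / (m : ℝ))) *
            δ ^ (-(∑ j ∈ Finset.univ.erase (0 : Fin n), (α j : ℝ)) / (m : ℝ))) ^ 2
        ≤ ∫ x in knappRect n c δ, ‖oscOp α m (knappF α m c' δ) x‖ ^ 2 := by
  obtain ⟨c', hc', hbound⟩ := exists_knappPhaseBound_le_one α hm hc
  refine ⟨c', hc', fun δ hδ hδ_le => ?_⟩
  have pointwise := fun x (hx : x ∈ knappRect n c δ) =>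
    prod_knappWidth_le_norm_oscOp_knappF α hm hc hc' hbound hδ hδ_le hx
  have square_integral := sq_mul_measureReal_le_setIntegral_norm_sq (μ := volume)
    (isCompact_knappRect c δ) (continuous_oscOp_knappF α m c' δ).continuousOn
    (Finset.prod_nonneg fun j _ => (knappWidth_pos α m hc' hδ j).le) pointwise
  rw [prod_knappWidth α m c' hδ] at pointwise square_integral
  refine ⟨pointwise, le_of_eq_of_le ?_ square_integral⟩
  rw [measureReal_knappRect hc hδ.le]
  ring

/-- Knapp example lower bounds: pointwise on `R_δ`,
`|T_{α,m} f(x)| ≥ (∏ c_j) δ^{-2/m} δ^{-(∑_{j≥2} α_j)/m}`, and consequently the squared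
`L²` integral over `R_δ` is bounded below by
`(∏ c_j)² (2c)ⁿ δ^{n+1} (δ^{-2/m} δ^{-(∑_{j≥2} α_j)/m})²` up to a fixed constant. -/
theorem knapp_lower_bound (n : ℕ) [NeZero n] (hn : 2 ≤ n) (α : Fin n → ℕ)
    (hα : ∀ j, 3 ≤ α j) (m : ℕ) (hm : 3 ≤ m) :
    ∃ c : ℝ, 0 < c ∧ ∃ c' : Fin n → ℝ, (∀ j, 0 < c' j) ∧ ∃ K : ℝ, 0 < K ∧
      ∀ δ : ℝ, 0 < δ → δ < 1 / 2 →
        (∀ x ∈ knappRect n c δ,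
          (∏ j, c' j) * (δ ^ (-(2 / (m : ℝ))) *
              δ ^ (-(∑ j ∈ Finset.univ.erase (0 : Fin n), (α j : ℝ)) / (m : ℝ)))
            ≤ ‖oscOp α m (knappF α m c' δ) x‖) ∧
        K * ((∏ j, c' j) ^ 2 * (2 * c) ^ n * δ ^ (n + 1) *
              (δ ^ (-(2 / (m : ℝ))) *
                δ ^ (-(∑ j ∈ Finset.univ.erase (0 : Fin n), (α j : ℝ)) / (m : ℝ))) ^ 2)
          ≤ ∫ x in knappRect n c δ, ‖oscOp α m (knappF α m c' δ) x‖ ^ 2 := by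
  obtain ⟨c', hc', h⟩ := knapp_lower_bound_general n α (m := m) (by omega) zero_le_one
  exact ⟨1, one_pos, c', hc', 1, one_pos, fun δ hδ hδ_lt => by
    simpa only [one_mul] using h δ hδ (by linarith)⟩
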